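/- Let (X, μ) and (Y, ν) be Polish probability spaces and ω : X × Y → [0, ∞) continuous. Then inf over all couplings κ of μ and ν of ∫ ω dκ equals the supremum, over pairs (ψ, φ) of bounded continuous real functions on X and Y respectively with φ(y) - ψ(x) ≤ ω(x, y) for all x, y, of ∫_Y φ dν - ∫_X ψ dμ. -/

import Mathlib

open MeasureTheory ENNReal

/-! Weak duality is integration of `φ y - ψ x ≤ c (x, y)` against a coupling. For the converse, let
`D` be the dual value, embed `X` and `Y` into compact metrizable spaces `A` and `B` by `i` and `j`,
and consider the convex cone of all `((f, g, t), u)` with `f`, `g` bounded continuous on `X`, `Y`,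
`t ≥ 0` and `u` continuous on `A × B` such that `f x + g y + u (i x, j y) ≤ t * c (x, y)`. On the
slice `u = 0` the functional `t * D - (∫ f dμ + ∫ g dν)` is nonnegative, so M. Riesz's extension
theorem provides a linear `L` on `C(A × B, ℝ)` with `L u ≤ t * D - (∫ f dμ + ∫ g dν)` on the whole
cone. Testing this bound with `f = g = 0`, `t = 0`, `u ≤ 0` shows that `L` is positive, hence
integration against a measure `κ'`; testing with `t = 0` and `u (a, b) = -f a` or `u (a, b) = -g b`
identifies the marginals of `κ'` as the images of `μ` and `ν`; testing with `f = g = 0`, `t = 1`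
bounds the cost of `κ'` by `D`, because a lower semicontinuous `c` is the supremum of the
continuous `u` below it. Since the marginals of `κ'` live on the images of `i` and `j`, the
coupling descends to `X × Y`, and this replaces any tightness argument. -/

open Topology TopologicalSpace
open scoped NNReal BoundedContinuousFunction CompactlySupported

section Coupling

variable {X Y A B : Type*} [MeasurableSpace X] [MeasurableSpace Y]
  [MeasurableSpace A] [MeasurableSpace B]

/-- `κ` is a coupling (transport plan) of `μ` and `ν`: its marginals are `μ` and `ν`. -/
structure IsCoupling (κ : Measure (X × Y)) (μ : Measure X) (ν : Measure Y) : Prop where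
  fst_eq : κ.fst = μ
  snd_eq : κ.snd = ν

namespace IsCoupling

variable {κ : Measure (X × Y)} {μ : Measure X} {ν : Measure Y}

lemma isProbabilityMeasure [IsProbabilityMeasure μ] (hκ : IsCoupling κ μ ν) :
    IsProbabilityMeasure κ := by
  have : IsProbabilityMeasure (κ.map Prod.fst) := by rwa [← Measure.fst, hκ.fst_eq]
  exact Measure.isProbabilityMeasure_of_map Prod.fst

lemma prod (μ : Measure X) (ν : Measure Y) [IsProbabilityMeasure μ] [IsProbabilityMeasure ν] :
    IsCoupling (μ.prod ν) μ ν :=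
  ⟨Measure.fst_prod, Measure.snd_prod⟩

lemma integrable_fst {E : Type*} [NormedAddCommGroup E] {f : X → E} (hκ : IsCoupling κ μ ν)
    (hf : Integrable f μ) : Integrable (fun p ↦ f p.1) κ := by
  rw [← hκ.fst_eq] at hf
  exact hf.comp_measurable measurable_fst

lemma integrable_snd {E : Type*} [NormedAddCommGroup E] {g : Y → E} (hκ : IsCoupling κ μ ν)
    (hg : Integrable g ν) : Integrable (fun p ↦ g p.2) κ := by
  rw [← hκ.snd_eq] at hg
  exact hg.comp_measurable measurable_snd

lemma integral_add {E : Type*} [NormedAddCommGroup E] [NormedSpace ℝ E] {f : X → E} {g : Y → E}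
    (hκ : IsCoupling κ μ ν) (hf : Integrable f μ) (hg : Integrable g ν) :
    ∫ p, f p.1 + g p.2 ∂κ = ∫ x, f x ∂μ + ∫ y, g y ∂ν := by
  rw [MeasureTheory.integral_add (hκ.integrable_fst hf) (hκ.integrable_snd hg)]
  obtain ⟨rfl, rfl⟩ := hκ
  rw [Measure.fst, Measure.snd, integral_map measurable_fst.aemeasurable hf.aestronglyMeasurable,
    integral_map measurable_snd.aemeasurable hg.aestronglyMeasurable]

lemma of_map {i : X → A} {j : Y → B} (hi : MeasurableEmbedding i) (hj : MeasurableEmbedding j)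
    (hκ : IsCoupling (κ.map (Prod.map i j)) (μ.map i) (ν.map j)) : IsCoupling κ μ ν := by
  have hij : Measurable (Prod.map i j) := hi.measurable.prodMap hj.measurable
  have map_fst : κ.fst.map i = μ.map i := by
    rw [← hκ.fst_eq, Measure.fst, Measure.fst, Measure.map_map hi.measurable measurable_fst,
      Measure.map_map measurable_fst hij]
    rfl
  have map_snd : κ.snd.map j = ν.map j := by
    rw [← hκ.snd_eq, Measure.snd, Measure.snd, Measure.map_map hj.measurable measurable_snd,
      Measure.map_map measurable_snd hij]
    rfl
  exact ⟨hi.map_injective map_fst, hj.map_injective map_snd⟩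

lemma ae_mem_range_prodMap {i : X → A} {j : Y → B} (hi : MeasurableEmbedding i)
    (hj : MeasurableEmbedding j) {κ' : Measure (A × B)}
    (hκ' : IsCoupling κ' (μ.map i) (ν.map j)) :
    ∀ᵐ z ∂κ', z ∈ Set.range (Prod.map i j) := by
  have mem_range_fst : ∀ᵐ z ∂κ', z.1 ∈ Set.range i := by
    refine ae_of_ae_map (p := (· ∈ Set.range i)) measurable_fst.aemeasurable ?_
    rw [← Measure.fst, hκ'.fst_eq, hi.ae_map_iff]
    exact .of_forall Set.mem_range_self
  have mem_range_snd : ∀ᵐ z ∂κ', z.2 ∈ Set.range j := by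
    refine ae_of_ae_map (p := (· ∈ Set.range j)) measurable_snd.aemeasurable ?_
    rw [← Measure.snd, hκ'.snd_eq, hj.ae_map_iff]
    exact .of_forall Set.mem_range_self
  filter_upwards [mem_range_fst, mem_range_snd] with z hz₁ hz₂
  exact Set.range_prodMap ▸ ⟨hz₁, hz₂⟩

lemma exists_map_prodMap_eq {i : X → A} {j : Y → B} (hi : MeasurableEmbedding i)
    (hj : MeasurableEmbedding j) {κ' : Measure (A × B)}
    (hκ' : IsCoupling κ' (μ.map i) (ν.map j)) :
    ∃ κ : Measure (X × Y), IsCoupling κ μ ν ∧ κ.map (Prod.map i j) = κ' := by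
  have map_comap : (κ'.comap (Prod.map i j)).map (Prod.map i j) = κ' := by
    rw [(hi.prodMap hj).map_comap,
      Measure.restrict_eq_self_of_ae_mem (ae_mem_range_prodMap hi hj hκ')]
  exact ⟨κ'.comap (Prod.map i j), of_map hi hj (map_comap.symm ▸ hκ'), map_comap⟩

end IsCoupling

end Coupling

lemma ofReal_integral_le_lintegral_ofReal {Z : Type*} [MeasurableSpace Z] (κ : Measure Z)
    (h : Z → ℝ) : ENNReal.ofReal (∫ z, h z ∂κ) ≤ ∫⁻ z, ENNReal.ofReal (h z) ∂κ := by
  by_cases hh : Integrable h κ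
  · refine ENNReal.ofReal_le_of_le_toReal ?_
    rw [integral_eq_lintegral_pos_part_sub_lintegral_neg_part hh]
    exact sub_le_self _ ENNReal.toReal_nonneg
  · simp [integral_undef hh]

lemma IsCoupling.ofReal_integral_add_le_lintegral {X Y : Type*} [MeasurableSpace X]
    [MeasurableSpace Y] {κ : Measure (X × Y)} {μ : Measure X} {ν : Measure Y}
    {c : X × Y → ℝ≥0∞} {f : X → ℝ} {g : Y → ℝ} (hκ : IsCoupling κ μ ν)
    (hf : Integrable f μ) (hg : Integrable g ν)
    (hfg : ∀ x y, ENNReal.ofReal (f x + g y) ≤ c (x, y)) :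
    ENNReal.ofReal (∫ x, f x ∂μ + ∫ y, g y ∂ν) ≤ ∫⁻ p, c p ∂κ := by
  rw [← hκ.integral_add hf hg]
  exact (ofReal_integral_le_lintegral_ofReal κ _).trans (lintegral_mono fun p ↦ hfg p.1 p.2)

lemma eq_of_forall_integral_le {Z : Type*} [MeasurableSpace Z] [TopologicalSpace Z]
    [HasOuterApproxClosed Z] [BorelSpace Z] {μ ν : Measure Z} [IsFiniteMeasure μ]
    [IsFiniteMeasure ν] (h : ∀ f : Z →ᵇ ℝ, ∫ z, f z ∂μ ≤ ∫ z, f z ∂ν) : μ = ν := by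
  refine ext_of_forall_integral_eq_of_IsFiniteMeasure fun f ↦ (h f).antisymm ?_
  simpa [integral_neg] using h (-f)

lemma IsCoupling.of_forall_integral_le {A B : Type*} [TopologicalSpace A] [MeasurableSpace A]
    [BorelSpace A] [HasOuterApproxClosed A] [TopologicalSpace B] [MeasurableSpace B] [BorelSpace B]
    [HasOuterApproxClosed B] {κ : Measure (A × B)} {μ : Measure A} {ν : Measure B}
    [IsFiniteMeasure κ] [IsFiniteMeasure μ] [IsFiniteMeasure ν]
    (h_fst : ∀ f : A →ᵇ ℝ, ∫ a, f a ∂μ ≤ ∫ z, f z.1 ∂κ)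
    (h_snd : ∀ g : B →ᵇ ℝ, ∫ b, g b ∂ν ≤ ∫ z, g z.2 ∂κ) : IsCoupling κ μ ν where
  fst_eq := by
    refine (eq_of_forall_integral_le fun f ↦ ?_).symm
    rw [Measure.fst, integral_map measurable_fst.aemeasurable (by fun_prop)]
    exact h_fst f
  snd_eq := by
    refine (eq_of_forall_integral_le fun g ↦ ?_).symm
    rw [Measure.snd, integral_map measurable_snd.aemeasurable (by fun_prop)]
    exact h_snd g

lemma exists_measure_forall_integral_eq {K : Type*} [TopologicalSpace K] [CompactSpace K]
    [T2Space K] [MeasurableSpace K] [BorelSpace K] (L : C(K, ℝ) →ₗ[ℝ] ℝ)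
    (hL : ∀ u, 0 ≤ u → 0 ≤ L u) :
    ∃ κ : Measure K, IsFiniteMeasure κ ∧ ∀ u : C(K, ℝ), ∫ z, u z ∂κ = L u := by
  let Λ : C_c(K, ℝ) →ₚ[ℝ] ℝ := PositiveLinearMap.mk₀
    { toFun := fun u ↦ L u
      map_add' := fun u v ↦ map_add L (u : C(K, ℝ)) v
      map_smul' := fun a u ↦ map_smul L a (u : C(K, ℝ)) }
    fun u hu ↦ hL u hu
  have : (RealRMK.rieszMeasure Λ).Regular := RealRMK.regular_rieszMeasure Λ
  exact ⟨RealRMK.rieszMeasure Λ, inferInstance, fun u ↦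
    RealRMK.integral_rieszMeasure Λ (CompactlySupportedContinuousMap.continuousMapEquiv u)⟩

lemma exists_linearMap_le {V U : Type*} [AddCommGroup V] [Module ℝ V] [AddCommGroup U]
    [Module ℝ U] (s : PointedCone ℝ (V × U)) (ℓ : V →ₗ[ℝ] ℝ)
    (nonneg : ∀ v, (v, (0 : U)) ∈ s → 0 ≤ ℓ v) (dense : ∀ u : U, ∃ v, (v, u) ∈ s) :
    ∃ L : U →ₗ[ℝ] ℝ, ∀ v u, (v, u) ∈ s → L u ≤ ℓ v := by
  let M : V × U →ₗ.[ℝ] ℝ :=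
    ⟨LinearMap.ker (LinearMap.snd ℝ V U), (ℓ ∘ₗ LinearMap.fst ℝ V U).domRestrict _⟩
  have nonneg_M : ∀ x : M.domain, (x : V × U) ∈ s → 0 ≤ M x := by
    rintro ⟨⟨v, u⟩, hu : u = 0⟩ hx
    subst hu
    exact nonneg v hx
  have dense_M : ∀ y, ∃ x : M.domain, (x : V × U) + y ∈ s := by
    rintro ⟨v, u⟩
    obtain ⟨v', hv'⟩ := dense u
    exact ⟨⟨(v' - v, 0), rfl⟩, by simpa using hv'⟩
  obtain ⟨L, hLM, hLs⟩ := riesz_extension s M nonneg_M dense_M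
  refine ⟨-(L ∘ₗ LinearMap.inr ℝ V U), fun v u hvu ↦ ?_⟩
  have hLv : L (v, 0) = ℓ v := hLM ⟨(v, 0), rfl⟩
  refine neg_le_iff_add_nonneg.2 ?_
  calc 0 ≤ L (v, u) := hLs _ hvu
    _ = ℓ v + L (0, u) := by rw [← hLv, ← map_add]; simp

lemma exists_continuous_le_of_lt {Z K : Type*} [TopologicalSpace Z]
    [TopologicalSpace K] [CompletelyRegularSpace K] {e : Z → K}
    (he : IsInducing e) {c : Z → ℝ≥0∞} (hc : LowerSemicontinuous c) {z : Z} {b : ℝ≥0}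
    (hb : b < c z) :
    ∃ w : C(K, ℝ≥0), (∀ y, w (e y) ≤ c y) ∧ w (e z) = b := by
  obtain ⟨V, hV, hVc⟩ := he.isOpen_iff.1 (hc.isOpen_preimage b)
  have hzV : e z ∈ V := (Set.ext_iff.1 hVc z).2 hb
  obtain ⟨χ, hχ, hχz, hχV⟩ :=
    CompletelyRegularSpace.completely_regular (e z) Vᶜ hV.isClosed_compl (not_not_intro hzV)
  refine ⟨⟨fun k ↦ b * unitInterval.toNNReal (unitInterval.symm (χ k)), by fun_prop⟩,
    fun y ↦ ?_, by simp [hχz]⟩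
  by_cases hy : e y ∈ V
  · have hby : b < c y := (Set.ext_iff.1 hVc y).1 hy
    have factor_le_one : unitInterval.toNNReal (unitInterval.symm (χ (e y))) ≤ 1 :=
      (unitInterval.symm (χ (e y))).2.2
    exact (ENNReal.coe_le_coe.2 (mul_le_of_le_one_right' factor_le_one)).trans hby.le
  · simp [hχV hy]

lemma exists_monotone_continuous_iSup_eq {Z K : Type*} [TopologicalSpace Z]
    [HereditarilyLindelofSpace Z] [TopologicalSpace K] [CompletelyRegularSpace K] {e : Z → K}
    (he : IsInducing e) {c : Z → ℝ≥0∞} (hc : LowerSemicontinuous c) :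
    ∃ w : ℕ → C(K, ℝ≥0), Monotone w ∧ ∀ z, ⨆ n, (w n (e z) : ℝ≥0∞) = c z := by
  let pullback : SupHom C(K, ℝ≥0) (Z → ℝ≥0∞) :=
    { toFun := fun w z ↦ w (e z)
      map_sup' := fun w w' ↦ by ext; simp }
  let minorants : Set C(K, ℝ≥0) := {w | pullback w ≤ c}
  have isLUB_minorants : IsLUB (pullback '' minorants) c := by
    refine ⟨Set.forall_mem_image.2 fun w hw ↦ hw, fun d hd z ↦ ?_⟩
    refine ENNReal.le_of_forall_nnreal_lt fun b hb ↦ ?_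
    obtain ⟨w, hw, hwz⟩ := exists_continuous_le_of_lt he hc hb
    exact hwz ▸ hd (Set.mem_image_of_mem pullback hw) z
  obtain ⟨F, hF, F_countable, isLUB_F⟩ := exists_countable_lowerSemicontinuous_isLUB
    (Set.forall_mem_image.2 fun w _ ↦
      (ENNReal.continuous_coe.comp (w.continuous.comp he.continuous)).lowerSemicontinuous)
    isLUB_minorants
  obtain ⟨φ, hφ⟩ := (F_countable.insert (pullback 0)).exists_eq_range (Set.insert_nonempty _ _)
  have isLUB_φ : IsLUB (Set.range φ) c := by
    rw [← hφ, ← sup_eq_right.2 (show pullback 0 ≤ c from fun z ↦ by simp [pullback])]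
    exact isLUB_F.insert _
  have exists_pullback_eq : ∀ n, ∃ w, pullback w = φ n := fun n ↦ by
    rcases hφ.symm ▸ Set.mem_range_self n with h | h
    · exact ⟨0, h.symm⟩
    · exact (hF h).imp fun w hw ↦ hw.2
  choose w hw using exists_pullback_eq
  refine ⟨partialSups w, (partialSups w).monotone, fun z ↦ ?_⟩
  calc ⨆ n, (partialSups w n (e z) : ℝ≥0∞)
      = (⨆ n, (pullback ∘ partialSups w) n) z := by rw [iSup_apply]; rfl
    _ = (⨆ n, φ n) z := by
        rw [← comp_partialSups, iSup_partialSups_eq, ← funext hw]; rfl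
    _ = c z := by rw [isLUB_φ.iSup_eq]

lemma lintegral_le_of_forall_continuous_le {Z K : Type*} [TopologicalSpace Z]
    [HereditarilyLindelofSpace Z] [MeasurableSpace Z] [OpensMeasurableSpace Z]
    [TopologicalSpace K] [CompletelyRegularSpace K] {e : Z → K} (he : IsInducing e)
    {c : Z → ℝ≥0∞} (hc : LowerSemicontinuous c) {κ : Measure Z} {D : ℝ≥0∞}
    (h : ∀ w : C(K, ℝ≥0), (∀ z, w (e z) ≤ c z) → ∫⁻ z, w (e z) ∂κ ≤ D) :
    ∫⁻ z, c z ∂κ ≤ D := by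
  obtain ⟨w, w_mono, hw⟩ := exists_monotone_continuous_iSup_eq he hc
  have measurable_w : ∀ n, Measurable fun z ↦ (w n (e z) : ℝ≥0∞) := fun n ↦
    ((w n).continuous.comp he.continuous).measurable.coe_nnreal_ennreal
  simp only [← hw]
  rw [lintegral_iSup measurable_w fun m n hmn z ↦ ENNReal.coe_le_coe.2 (w_mono hmn (e z))]
  exact iSup_le fun n ↦ h (w n) fun z ↦ hw z ▸ le_iSup (fun n ↦ (w n (e z) : ℝ≥0∞)) n

section Duality

variable {X Y K : Type*} [TopologicalSpace X] [TopologicalSpace Y] [TopologicalSpace K]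

/-- The cone of `((f, g, t), u)` with `0 ≤ t` and `f x + g y + u (e (x, y)) ≤ t * c (x, y)`, to
which the M. Riesz extension theorem is applied. The positive part taken by `ENNReal.ofReal` is
harmless as `c` is nonnegative; where `c = ∞`, the convention `0 * ∞ = 0` makes the constraint at
`t = 0` read `f x + g y + u (e (x, y)) ≤ 0`. -/
def subcostCone (c : X × Y → ℝ≥0∞) (e : X × Y → K) :
    PointedCone ℝ (((X →ᵇ ℝ) × (Y →ᵇ ℝ) × ℝ) × C(K, ℝ)) where
  carrier := {((f, g, t), u) | 0 ≤ t ∧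
    ∀ x y, ENNReal.ofReal (f x + g y + u (e (x, y))) ≤ ENNReal.ofReal t * c (x, y)}
  zero_mem' := by simp
  add_mem' := by
    rintro ⟨⟨f, g, t⟩, u⟩ ⟨⟨f', g', t'⟩, u'⟩ ⟨ht, h⟩ ⟨ht', h'⟩
    refine ⟨add_nonneg ht ht', fun x y ↦ ?_⟩
    calc ENNReal.ofReal ((f + f') x + (g + g') y + (u + u') (e (x, y)))
        = ENNReal.ofReal ((f x + g y + u (e (x, y))) + (f' x + g' y + u' (e (x, y)))) := by
          congr 1; simp only [BoundedContinuousFunction.add_apply, ContinuousMap.add_apply]; ring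
      _ ≤ ENNReal.ofReal t * c (x, y) + ENNReal.ofReal t' * c (x, y) :=
          ENNReal.ofReal_add_le.trans (add_le_add (h x y) (h' x y))
      _ = ENNReal.ofReal (t + t') * c (x, y) := by rw [ENNReal.ofReal_add ht ht', add_mul]
  smul_mem' := by
    rintro ⟨a, ha⟩ ⟨⟨f, g, t⟩, u⟩ ⟨ht, h⟩
    refine ⟨mul_nonneg ha ht, fun x y ↦ ?_⟩
    calc ENNReal.ofReal (a * f x + a * g y + a * u (e (x, y)))
        = ENNReal.ofReal a * ENNReal.ofReal (f x + g y + u (e (x, y))) := by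
          rw [← ENNReal.ofReal_mul ha, mul_add, mul_add]
      _ ≤ ENNReal.ofReal a * (ENNReal.ofReal t * c (x, y)) := by gcongr; exact h x y
      _ = ENNReal.ofReal (a * t) * c (x, y) := by rw [← mul_assoc, ENNReal.ofReal_mul ha]

variable [MeasurableSpace X] [OpensMeasurableSpace X] [MeasurableSpace Y] [OpensMeasurableSpace Y]

/-- The homogenized gap between a candidate value `D` of the dual problem and the dual objective. It
is linear in `(f, g, t)`, and `t = 1` is the gap itself. -/
noncomputable def dualityGap (μ : Measure X) (ν : Measure Y) [IsFiniteMeasure μ]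
    [IsFiniteMeasure ν] (D : ℝ) : (X →ᵇ ℝ) × (Y →ᵇ ℝ) × ℝ →ₗ[ℝ] ℝ where
  toFun := fun (f, g, t) ↦ t * D - (∫ x, f x ∂μ + ∫ y, g y ∂ν)
  map_add' := by
    rintro ⟨f, g, t⟩ ⟨f', g', t'⟩
    have add_f := integral_add (f.integrable μ) (f'.integrable μ)
    have add_g := integral_add (g.integrable ν) (g'.integrable ν)
    simp only [BoundedContinuousFunction.add_apply, add_f, add_g]
    ring
  map_smul' := by
    rintro a ⟨f, g, t⟩
    simp only [Prod.smul_mk, BoundedContinuousFunction.smul_apply, smul_eq_mul, integral_const_mul,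
      RingHom.id_apply]
    ring

variable {μ : Measure X} {ν : Measure Y} [IsProbabilityMeasure μ] [IsProbabilityMeasure ν]
  {c : X × Y → ℝ≥0∞} {D : ℝ}

lemma integral_add_le_mul_of_le_mul
    (hD : ∀ (f : X →ᵇ ℝ) (g : Y →ᵇ ℝ), (∀ x y, ENNReal.ofReal (f x + g y) ≤ c (x, y)) →
      ∫ x, f x ∂μ + ∫ y, g y ∂ν ≤ D)
    {f : X →ᵇ ℝ} {g : Y →ᵇ ℝ} {t : ℝ} (ht : 0 ≤ t)
    (hfg : ∀ x y, ENNReal.ofReal (f x + g y) ≤ ENNReal.ofReal t * c (x, y)) :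
    ∫ x, f x ∂μ + ∫ y, g y ∂ν ≤ t * D := by
  rcases ht.eq_or_lt with rfl | ht
  · simpa using (IsCoupling.prod μ ν).ofReal_integral_add_le_lintegral (c := 0)
      (f.integrable μ) (g.integrable ν) (by simpa using hfg)
  · have h := hD (t⁻¹ • f) (t⁻¹ • g) fun x y ↦ by
      calc ENNReal.ofReal (t⁻¹ * f x + t⁻¹ * g y)
          = (ENNReal.ofReal t)⁻¹ * ENNReal.ofReal (f x + g y) := by
            rw [← mul_add, ENNReal.ofReal_mul (inv_nonneg.2 ht.le), ENNReal.ofReal_inv_of_pos ht]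
        _ ≤ c (x, y) := ENNReal.inv_mul_le_iff (by simpa) ENNReal.ofReal_ne_top |>.2 (hfg x y)
    simp only [BoundedContinuousFunction.smul_apply, smul_eq_mul, integral_const_mul] at h
    rwa [← mul_add, inv_mul_le_iff₀ ht] at h

lemma exists_measure_forall_integral_add_le [CompactSpace K] [T2Space K] [MeasurableSpace K]
    [BorelSpace K] (e : X × Y → K)
    (hD : ∀ (f : X →ᵇ ℝ) (g : Y →ᵇ ℝ), (∀ x y, ENNReal.ofReal (f x + g y) ≤ c (x, y)) →
      ∫ x, f x ∂μ + ∫ y, g y ∂ν ≤ D) :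
    ∃ κ : Measure K, IsFiniteMeasure κ ∧ ∀ (f : X →ᵇ ℝ) (g : Y →ᵇ ℝ) (t : ℝ) (u : C(K, ℝ)), 0 ≤ t →
      (∀ x y, ENNReal.ofReal (f x + g y + u (e (x, y))) ≤ ENNReal.ofReal t * c (x, y)) →
      ∫ x, f x ∂μ + ∫ y, g y ∂ν + ∫ z, u z ∂κ ≤ t * D := by
  have nonneg : ∀ v, (v, 0) ∈ subcostCone c e → 0 ≤ dualityGap μ ν D v := by
    rintro ⟨f, g, t⟩ ⟨ht, h⟩
    exact sub_nonneg.2 (integral_add_le_mul_of_le_mul hD ht (by simpa using h))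
  have dense : ∀ u, ∃ v, (v, u) ∈ subcostCone c e := fun u ↦
    ⟨(.const X (-‖u‖), 0, 0), le_rfl, fun x y ↦ by
      simpa using (le_abs_self _).trans (u.norm_coe_le_norm (e (x, y)))⟩
  obtain ⟨L, hL⟩ := exists_linearMap_le (subcostCone c e) (dualityGap μ ν D) nonneg dense
  have L_nonneg : ∀ u, 0 ≤ u → 0 ≤ L u := fun u hu ↦ by
    have h := hL 0 (-u) ⟨le_rfl, fun x y ↦ by simpa using hu (e (x, y))⟩
    simpa using h
  obtain ⟨κ, hκ, hκL⟩ := exists_measure_forall_integral_eq L L_nonneg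
  refine ⟨κ, hκ, fun f g t u ht h ↦ ?_⟩
  rw [hκL, add_comm]
  exact le_sub_iff_add_le.1 (hL (f, g, t) u ⟨ht, h⟩)

end Duality

section Attainment

variable {X Y A B : Type*}
  [TopologicalSpace X] [SecondCountableTopology X] [MeasurableSpace X] [OpensMeasurableSpace X]
  [TopologicalSpace Y] [SecondCountableTopology Y] [MeasurableSpace Y] [OpensMeasurableSpace Y]
  [TopologicalSpace A] [CompactSpace A] [MetrizableSpace A] [MeasurableSpace A] [BorelSpace A]
  [TopologicalSpace B] [CompactSpace B] [MetrizableSpace B] [MeasurableSpace B] [BorelSpace B]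
  {μ : Measure X} {ν : Measure Y} [IsProbabilityMeasure μ] [IsProbabilityMeasure ν]
  {c : X × Y → ℝ≥0∞} {D : ℝ}

lemma exists_isCoupling_lintegral_le_of_isEmbedding {i : X → A} {j : Y → B}
    (hi : IsEmbedding i) (hi' : MeasurableEmbedding i)
    (hj : IsEmbedding j) (hj' : MeasurableEmbedding j) (hc : LowerSemicontinuous c)
    (hD : ∀ (f : X →ᵇ ℝ) (g : Y →ᵇ ℝ), (∀ x y, ENNReal.ofReal (f x + g y) ≤ c (x, y)) →
      ∫ x, f x ∂μ + ∫ y, g y ∂ν ≤ D) :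
    ∃ κ : Measure (X × Y), IsCoupling κ μ ν ∧ ∫⁻ p, c p ∂κ ≤ ENNReal.ofReal D := by
  obtain ⟨κ', hκ'_finite, hκ'⟩ := exists_measure_forall_integral_add_le (Prod.map i j) hD
  have isCoupling_κ' : IsCoupling κ' (μ.map i) (ν.map j) := by
    refine IsCoupling.of_forall_integral_le (fun f ↦ ?_) fun g ↦ ?_
    · rw [hi'.integral_map]
      have h := hκ' (f.compContinuous ⟨i, hi.continuous⟩) 0 0
        (-f.toContinuousMap.comp ContinuousMap.fst) le_rfl (by simp)
      simpa [integral_neg] using h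
    · rw [hj'.integral_map]
      have h := hκ' 0 (g.compContinuous ⟨j, hj.continuous⟩) 0
        (-g.toContinuousMap.comp ContinuousMap.snd) le_rfl (by simp)
      simpa [integral_neg] using h
  obtain ⟨κ, hκ, rfl⟩ := isCoupling_κ'.exists_map_prodMap_eq hi' hj'
  refine ⟨κ, hκ, lintegral_le_of_forall_continuous_le (hi.prodMap hj).isInducing hc fun w hw ↦ ?_⟩
  let u : C(A × B, ℝ) := ⟨fun z ↦ w z, by fun_prop⟩
  have integrable_u := (BoundedContinuousFunction.mkOfCompact u).integrable
    (κ.map (Prod.map i j))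
  have h := hκ' 0 0 1 u zero_le_one (by simpa [u] using hw)
  calc ∫⁻ p, w (Prod.map i j p) ∂κ
      = ∫⁻ z, w z ∂κ.map (Prod.map i j) :=
        ((hi'.prodMap hj').lintegral_map fun z ↦ (w z : ℝ≥0∞)).symm
    _ = ENNReal.ofReal (∫ z, u z ∂κ.map (Prod.map i j)) :=
        lintegral_coe_eq_integral _ integrable_u
    _ ≤ ENNReal.ofReal D := ENNReal.ofReal_le_ofReal (by simpa using h)

end Attainment

theorem exists_isCoupling_lintegral_le {X Y : Type*}
    [TopologicalSpace X] [MetrizableSpace X] [SecondCountableTopology X]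
    [MeasurableSpace X] [BorelSpace X] [StandardBorelSpace X]
    [TopologicalSpace Y] [MetrizableSpace Y] [SecondCountableTopology Y]
    [MeasurableSpace Y] [BorelSpace Y] [StandardBorelSpace Y]
    {μ : Measure X} {ν : Measure Y} [IsProbabilityMeasure μ] [IsProbabilityMeasure ν]
    {c : X × Y → ℝ≥0∞} {D : ℝ} (hc : LowerSemicontinuous c)
    (hD : ∀ (f : X →ᵇ ℝ) (g : Y →ᵇ ℝ), (∀ x y, ENNReal.ofReal (f x + g y) ≤ c (x, y)) →
      ∫ x, f x ∂μ + ∫ y, g y ∂ν ≤ D) :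
    ∃ κ : Measure (X × Y), IsCoupling κ μ ν ∧ ∫⁻ p, c p ∂κ ≤ ENNReal.ofReal D := by
  let := metrizableSpaceMetric X
  let := metrizableSpaceMetric Y
  obtain ⟨i, hi⟩ := Metric.PiNatEmbed.exists_embedding_to_hilbert_cube (X := X)
  obtain ⟨j, hj⟩ := Metric.PiNatEmbed.exists_embedding_to_hilbert_cube (X := Y)
  exact exists_isCoupling_lintegral_le_of_isEmbedding
    hi (hi.continuous.measurable.measurableEmbedding hi.injective)
    hj (hj.continuous.measurable.measurableEmbedding hj.injective) hc hD

theorem stmt_5_general (X Y : Type*)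
    [TopologicalSpace X] [MetrizableSpace X] [SecondCountableTopology X]
    [MeasurableSpace X] [BorelSpace X] [StandardBorelSpace X]
    [TopologicalSpace Y] [MetrizableSpace Y] [SecondCountableTopology Y]
    [MeasurableSpace Y] [BorelSpace Y] [StandardBorelSpace Y]
    (μ : Measure X) (ν : Measure Y) [IsProbabilityMeasure μ] [IsProbabilityMeasure ν]
    (c : X × Y → ℝ≥0∞) (hc : LowerSemicontinuous c) :
    sInf {r : ℝ≥0∞ | ∃ κ : Measure (X × Y), IsProbabilityMeasure κ ∧
        κ.map Prod.fst = μ ∧ κ.map Prod.snd = ν ∧ r = ∫⁻ p, c p ∂κ} =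
      sSup {r : ℝ≥0∞ | ∃ (ψ : X →ᵇ ℝ) (φ : Y →ᵇ ℝ),
          (∀ x y, ENNReal.ofReal (φ y - ψ x) ≤ c (x, y)) ∧
          r = ENNReal.ofReal ((∫ y, φ y ∂ν) - (∫ x, ψ x ∂μ))} := by
  refine le_antisymm (le_sSup_iff.2 fun T hT ↦ ?_) (sSup_le ?_)
  · rcases eq_or_ne T ∞ with rfl | T_ne_top
    · exact le_top
    have hD : ∀ (f : X →ᵇ ℝ) (g : Y →ᵇ ℝ), (∀ x y, ENNReal.ofReal (f x + g y) ≤ c (x, y)) →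
        ∫ x, f x ∂μ + ∫ y, g y ∂ν ≤ T.toReal := fun f g hfg ↦ by
      rw [← ENNReal.ofReal_le_iff_le_toReal T_ne_top]
      exact hT ⟨-f, g, by simpa [add_comm] using hfg, by simp [integral_neg, add_comm]⟩
    obtain ⟨κ, hκ, lintegral_le⟩ := exists_isCoupling_lintegral_le hc hD
    rw [ENNReal.ofReal_toReal T_ne_top] at lintegral_le
    exact sInf_le_of_le ⟨κ, hκ.isProbabilityMeasure, hκ.fst_eq, hκ.snd_eq, rfl⟩ lintegral_le
  · rintro _ ⟨ψ, φ, hψφ, rfl⟩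
    refine le_sInf ?_
    rintro _ ⟨κ, -, fst_eq, snd_eq, rfl⟩
    rw [sub_eq_neg_add, ← integral_neg]
    refine IsCoupling.ofReal_integral_add_le_lintegral ⟨fst_eq, snd_eq⟩ (ψ.integrable μ).neg
      (φ.integrable ν) fun x y ↦ ?_
    simpa only [neg_add_eq_sub] using hψφ x y

/-- Kantorovich duality: for Polish probability spaces `(X, μ)`, `(Y, ν)` and a
continuous nonnegative cost `ω`, the minimal transport cost over all couplings of
`μ` and `ν` equals the supremum of `∫ φ dν - ∫ ψ dμ` over pairs of bounded
continuous functions with `φ(y) - ψ(x) ≤ ω(x, y)`. -/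
theorem stmt_5 (X Y : Type*) [TopologicalSpace X] [PolishSpace X]
    [MeasurableSpace X] [BorelSpace X]
    [TopologicalSpace Y] [PolishSpace Y] [MeasurableSpace Y] [BorelSpace Y]
    (μ : Measure X) (ν : Measure Y)
    [IsProbabilityMeasure μ] [IsProbabilityMeasure ν]
    (ω : X × Y → ℝ) (hω_cont : Continuous ω) (hω_nonneg : ∀ p, 0 ≤ ω p) :
    sInf {r : ℝ≥0∞ | ∃ κ : Measure (X × Y), IsProbabilityMeasure κ ∧
        κ.map Prod.fst = μ ∧ κ.map Prod.snd = ν ∧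
        r = ∫⁻ p, ENNReal.ofReal (ω p) ∂κ} =
      sSup {r : ℝ≥0∞ | ∃ (ψ : BoundedContinuousFunction X ℝ)
          (φ : BoundedContinuousFunction Y ℝ),
          (∀ x y, φ y - ψ x ≤ ω (x, y)) ∧
          r = ENNReal.ofReal ((∫ y, φ y ∂ν) - (∫ x, ψ x ∂μ))} := by
  simpa only [ENNReal.ofReal_le_ofReal_iff (hω_nonneg _)] using
    stmt_5_general X Y μ ν (fun p ↦ ENNReal.ofReal (ω p))
      (ENNReal.continuous_ofReal.comp hω_cont).lowerSemicontinuous
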